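/- Let Φ : T(H1) → T(H2) be a quantum operation with Kraus decomposition Φ(T) = Σ_{j∈Λ} A_j T A_j*, where {A_j}_{j∈Λ} ⊆ B(H1,H2) is a countable family with Σ_{j∈Λ} A_j*A_j convergent in the strong operator topology to a bounded operator. If H3 is any separable complex Hilbert space with orthonormal basis {e_j : j∈Λ}, then the map Ψ : T(H1) → T(H3) given by Ψ(T) = Σ_{i,j∈Λ} tr(A_i T A_j*) |e_i⟩⟨e_j| is a well-defined quantum operation and is complementary to Φ. -/

import Mathlib

/-!
The operator `V x = Σ_i A_i x ⊗ e_i` is a Stinespring dilation of `Φ`; tracing out `H3` from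
`V T V*` returns `Φ(T)` and tracing out `H2` returns `Ψ(T)`. Here `H2 ⊗ H3` is realized as
`ℓ²(ι × κ)` by means of `e` and a Hilbert basis `b` of `H2` (`tensorL2`), and `V` has coordinates
`⟪b_k, A_i x⟫`; it is bounded since `Σ_i ‖A_i x‖² = ⟪x, S x⟫` (`exists_stinespring`).

Contracting the `H2` leg with `b_k` gives operators `B_k : H1 → H3` (`complKraus`), and
`Ψ(T) = Σ_k B_k T B_k*`. One has `Σ_k B_k* B_k = V* V` strongly (`hasSum_complKraus`), and for
trace-class `T` the sum defining `Ψ(T)` converges absolutely in operator norm by Cauchy-Schwarz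
(`summable_kraus`). The identities `V*(x ⊗ e_i) = A_i* x` and `V*(b_k ⊗ y) = B_k* y` then yield
both partial traces and the matrix elements of `Ψ(T)`. The basis `b` is a reindexing of the one
in which `trace` is computed, so basis independence of the trace is not needed.
-/

noncomputable section

namespace PaperInf

open scoped ComplexInnerProductSpace ComplexOrder
open ContinuousLinearMap TopologicalSpace

/-- A bundled separable complex Hilbert space. -/
structure SepHilbert : Type 1 where
  carrier : Type
  [nacg : NormedAddCommGroup carrier]
  [ips : InnerProductSpace ℂ carrier]
  [cs : CompleteSpace carrier]
  [sep : SeparableSpace carrier]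

attribute [instance] SepHilbert.nacg SepHilbert.ips SepHilbert.cs SepHilbert.sep

variable {H H1 H2 H3 H4 K W W' : Type*}
  [NormedAddCommGroup H] [InnerProductSpace ℂ H] [CompleteSpace H]
  [NormedAddCommGroup H1] [InnerProductSpace ℂ H1] [CompleteSpace H1]
  [NormedAddCommGroup H2] [InnerProductSpace ℂ H2] [CompleteSpace H2]
  [NormedAddCommGroup H3] [InnerProductSpace ℂ H3] [CompleteSpace H3]
  [NormedAddCommGroup H4] [InnerProductSpace ℂ H4] [CompleteSpace H4]
  [NormedAddCommGroup K] [InnerProductSpace ℂ K] [CompleteSpace K]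
  [NormedAddCommGroup W] [InnerProductSpace ℂ W] [CompleteSpace W]
  [NormedAddCommGroup W'] [InnerProductSpace ℂ W'] [CompleteSpace W']

/-- `T` is a trace-class operator: it admits a nuclear decomposition
`T = Σ_n |x_n⟩⟨y_n|` with `Σ_n ‖x_n‖ ‖y_n‖ < ∞`. -/
def IsTraceClass (T : H →L[ℂ] H) : Prop :=
  ∃ x y : ℕ → H, Summable (fun n => ‖x n‖ * ‖y n‖) ∧
    ∀ v, HasSum (fun n => ⟪y n, v⟫ • x n) (T v)

/-- The rank-one operator `|x⟩⟨y| : H1 → H2`, `v ↦ ⟪y, v⟫ x`. -/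
def ketbra (x : H2) (y : H1) : H1 →L[ℂ] H2 :=
  (innerSL ℂ y).smulRight x

/-- The trace of an operator, computed in a (choice of) Hilbert basis.  On trace-class
operators this is the usual basis-independent trace. -/
def trace (T : H →L[ℂ] H) : ℂ :=
  ∑' i : (exists_hilbertBasis ℂ H).choose, ⟪(i : H), T (i : H)⟫

/-- `ρ` is a state: a positive trace-class operator of trace one. -/
def IsState (ρ : H →L[ℂ] H) : Prop :=
  IsTraceClass ρ ∧ ρ.IsPositive ∧ trace ρ = 1

/-- `Φ` is a quantum operation from `T(H1)` to `T(H2)`: a (trace-norm bounded linear) map whose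
dual is a normal completely positive map; equivalently a map admitting a Kraus decomposition
`Φ(T) = Σ_j A_j T A_j*` with `Σ_j A_j* A_j` convergent in the strong operator topology to a
bounded operator. -/
def IsQuantumOperation (Φ : (H1 →L[ℂ] H1) → (H2 →L[ℂ] H2)) : Prop :=
  ∃ (ι : Type) (_ : Countable ι) (A : ι → H1 →L[ℂ] H2) (S : H1 →L[ℂ] H1),
    (∀ x, HasSum (fun j => adjoint (A j) (A j x)) (S x)) ∧
    ∀ T, IsTraceClass T → HasSum (fun j => A j ∘L T ∘L adjoint (A j)) (Φ T)

/-- A quantum channel is a trace-preserving quantum operation. -/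
def IsQuantumChannel (Φ : (H1 →L[ℂ] H1) → (H2 →L[ℂ] H2)) : Prop :=
  IsQuantumOperation Φ ∧ ∀ T, IsTraceClass T → trace (Φ T) = trace T

/-- A realization of `W` as the Hilbert-space tensor product `K ⊗ H`:
a map `t : K → H → W` with `⟪t x y, t x' y'⟫ = ⟪x,x'⟫ ⟪y,y'⟫` whose range spans a
dense subspace. -/
structure TensorStruct (K H W : Type*) [NormedAddCommGroup K] [InnerProductSpace ℂ K]
    [NormedAddCommGroup H] [InnerProductSpace ℂ H]
    [NormedAddCommGroup W] [InnerProductSpace ℂ W] : Type _ where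
  t : K → H → W
  inner_t : ∀ (x x' : K) (y y' : H), ⟪t x y, t x' y'⟫ = ⟪x, x'⟫ * ⟪y, y'⟫
  dense_t : (Submodule.span ℂ {w : W | ∃ x y, w = t x y}).topologicalClosure = ⊤

/-- `P = tr_{H'}(S)`: the partial trace of `S ∈ B(W)`, `W = H ⊗ H'`, over the second factor. -/
def IsPartialTraceRight {H' : Type*} [NormedAddCommGroup H'] [InnerProductSpace ℂ H']
    (ts : TensorStruct H H' W) (S : W →L[ℂ] W) (P : H →L[ℂ] H) : Prop :=
  ∃ (ι : Type) (_ : Countable ι) (b : HilbertBasis ι ℂ H'),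
    ∀ x y : H, HasSum (fun i => ⟪ts.t x (b i), S (ts.t y (b i))⟫) ⟪x, P y⟫

/-- `P = tr_{H}(S)`: the partial trace of `S ∈ B(W)`, `W = H ⊗ H'`, over the first factor. -/
def IsPartialTraceLeft {H' : Type*} [NormedAddCommGroup H'] [InnerProductSpace ℂ H']
    (ts : TensorStruct H H' W) (S : W →L[ℂ] W) (P : H' →L[ℂ] H') : Prop :=
  ∃ (ι : Type) (_ : Countable ι) (b : HilbertBasis ι ℂ H),
    ∀ x y : H', HasSum (fun i => ⟪ts.t (b i) x, S (ts.t (b i) y)⟫) ⟪x, P y⟫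

/-- The quantum operation `Ψ : T(H1) → T(H3)` is complementary to the quantum operation
`Φ : T(H1) → T(H2)`: there is a bounded operator `A : H1 → H2 ⊗ H3` with
`Φ(T) = tr_{H3}(A T A*)` and `Ψ(T) = tr_{H2}(A T A*)` for all trace-class `T`. -/
def IsComplementary (Ψ : (H1 →L[ℂ] H1) → (H3 →L[ℂ] H3))
    (Φ : (H1 →L[ℂ] H1) → (H2 →L[ℂ] H2)) : Prop :=
  ∃ (W : SepHilbert) (ts : TensorStruct H2 H3 W.carrier) (A : H1 →L[ℂ] W.carrier),
    ∀ T, IsTraceClass T →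
      IsPartialTraceRight ts (A ∘L T ∘L adjoint A) (Φ T) ∧
      IsPartialTraceLeft ts (A ∘L T ∘L adjoint A) (Ψ T)

/-- `Φ` is degradable: there is a quantum operation `Γ` with `Γ ∘ Φ` complementary to `Φ`;
equivalently (and as formalized here), for every quantum operation `Ψ` complementary to `Φ`
there is a quantum operation `Γ` with `Γ ∘ Φ = Ψ`. -/
def Degradable (Φ : (H1 →L[ℂ] H1) → (H2 →L[ℂ] H2)) : Prop :=
  ∀ (K : SepHilbert) (Ψ : (H1 →L[ℂ] H1) → (K.carrier →L[ℂ] K.carrier)),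
    IsQuantumOperation Ψ → IsComplementary Ψ Φ →
      ∃ Γ : (H2 →L[ℂ] H2) → (K.carrier →L[ℂ] K.carrier),
        IsQuantumOperation Γ ∧ ∀ T, IsTraceClass T → Γ (Φ T) = Ψ T

/-- `Φ` is anti-degradable: some (equivalently, by the uniqueness of complements up to
partial isometries, every) quantum operation complementary to `Φ` is degradable. -/
def AntiDegradable (Φ : (H1 →L[ℂ] H1) → (H2 →L[ℂ] H2)) : Prop :=
  ∀ (K : SepHilbert) (Ψ : (H1 →L[ℂ] H1) → (K.carrier →L[ℂ] K.carrier)),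
    IsQuantumOperation Ψ → IsComplementary Ψ Φ → Degradable Ψ

/-- `τ = ρ1 ⊗ ρ2` on `W = K ⊗ H`. -/
def IsProductOp (ts : TensorStruct K H W) (ρ1 : K →L[ℂ] K) (ρ2 : H →L[ℂ] H)
    (τ : W →L[ℂ] W) : Prop :=
  ∀ (x x' : K) (y y' : H), ⟪ts.t x y, τ (ts.t x' y')⟫ = ⟪x, ρ1 x'⟫ * ⟪y, ρ2 y'⟫

/-- `ρ` (a positive trace-class operator on `W = K ⊗ H`) is countably decomposable separable:
`ρ = Σ_n p_n ρ_n^(1) ⊗ ρ_n^(2)` (trace-norm convergent) for states `ρ_n^(1)`, `ρ_n^(2)` and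
nonnegative summable weights `p_n`. -/
def CDSeparable (ts : TensorStruct K H W) (ρ : W →L[ℂ] W) : Prop :=
  ∃ (p : ℕ → ℝ) (ρ1 : ℕ → K →L[ℂ] K) (ρ2 : ℕ → H →L[ℂ] H) (τ : ℕ → W →L[ℂ] W),
    (∀ n, 0 ≤ p n) ∧ Summable p ∧
    (∀ n, IsState (ρ1 n)) ∧ (∀ n, IsState (ρ2 n)) ∧
    (∀ n, IsProductOp ts (ρ1 n) (ρ2 n) (τ n)) ∧
    HasSum (fun n => (p n : ℂ) • τ n) ρ

/-- `σ = (id_K ⊗ Φ)(ρ)`, where `ρ ∈ T(K ⊗ H1)`, `σ ∈ T(K ⊗ H2)`: for a Kraus decomposition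
`Φ = Σ_j A_j (·) A_j*` one has `σ = Σ_j (I ⊗ A_j) ρ (I ⊗ A_j)*`. -/
def IsIdTensorApply (ts : TensorStruct K H1 W) (ts' : TensorStruct K H2 W')
    (Φ : (H1 →L[ℂ] H1) → (H2 →L[ℂ] H2)) (ρ : W →L[ℂ] W) (σ : W' →L[ℂ] W') : Prop :=
  ∃ (ι : Type) (_ : Countable ι) (A : ι → H1 →L[ℂ] H2) (S : H1 →L[ℂ] H1),
    (∀ x, HasSum (fun j => adjoint (A j) (A j x)) (S x)) ∧
    (∀ T, IsTraceClass T → HasSum (fun j => A j ∘L T ∘L adjoint (A j)) (Φ T)) ∧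
    ∃ L : ι → (W →L[ℂ] W'),
      (∀ j x y, L j (ts.t x y) = ts'.t x (A j y)) ∧
      HasSum (fun j => L j ∘L ρ ∘L adjoint (L j)) σ

/-- `Φ` is strongly entanglement breaking: for every separable Hilbert space `K` and every
state `ρ` on `K ⊗ H1`, the state `(id_K ⊗ Φ)(ρ)` is countably decomposable separable. -/
def IsSEB (Φ : (H1 →L[ℂ] H1) → (H2 →L[ℂ] H2)) : Prop :=
  ∀ (K W W' : SepHilbert) (ts : TensorStruct K.carrier H1 W.carrier)
    (ts' : TensorStruct K.carrier H2 W'.carrier)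
    (ρ : W.carrier →L[ℂ] W.carrier) (σ : W'.carrier →L[ℂ] W'.carrier),
    IsState ρ → IsIdTensorApply ts ts' Φ ρ σ → CDSeparable ts' σ

/-! ### Hilbert bases of separable spaces -/

/-- A Hilbert basis transported along an equivalence of index types. -/
lemma exists_hilbertBasis_reindex {α β : Type*} (b : HilbertBasis α ℂ H) (σ : β ≃ α) :
    ∃ b' : HilbertBasis β ℂ H, ∀ k, b' k = b (σ k) := by
  have hv : Orthonormal ℂ (fun k => b (σ k)) := b.orthonormal.comp σ σ.injective
  have hr : Set.range (fun k => b (σ k)) = Set.range b := σ.surjective.range_comp b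
  refine ⟨HilbertBasis.mk hv (by rw [hr, b.dense_span]), fun k => ?_⟩
  rw [HilbertBasis.coe_mk]

/-- An orthonormal family in a separable space is countable: balls of radius `1/2` around
its members are pairwise disjoint. -/
lemma countable_of_orthonormal [SeparableSpace H] {α : Type*} {v : α → H}
    (hv : Orthonormal ℂ v) : Countable α := by
  refine Pairwise.countable_of_isOpen_disjoint (s := fun a => Metric.ball (v a) (1 / 2))
    (fun a a' h => Metric.ball_disjoint_ball ?_) (fun _ => Metric.isOpen_ball)
    (fun a => ⟨v a, Metric.mem_ball_self (by norm_num)⟩)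
  have h2 : ‖v a - v a'‖ ^ 2 = 2 := by
    rw [@norm_sub_sq ℂ, hv.1, hv.1, hv.2 h]
    norm_num
  rw [dist_eq_norm]
  nlinarith [norm_nonneg (v a - v a')]

/-- The trace is computed in a Hilbert basis indexed by a countable type in universe `0`. -/
lemma exists_basis_trace (H : Type*) [NormedAddCommGroup H] [InnerProductSpace ℂ H]
    [CompleteSpace H] [SeparableSpace H] :
    ∃ (κ : Type) (_ : Countable κ) (b : HilbertBasis κ ℂ H),
      ∀ T : H →L[ℂ] H, trace T = ∑' k, ⟪b k, T (b k)⟫ := by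
  obtain ⟨c, hc⟩ := (exists_hilbertBasis ℂ H).choose_spec
  have : Countable (exists_hilbertBasis ℂ H).choose := countable_of_orthonormal c.orthonormal
  obtain ⟨b, hb⟩ := exists_hilbertBasis_reindex c
    (equivShrink.{0} (exists_hilbertBasis ℂ H).choose).symm
  refine ⟨_, (equivShrink.{0} (exists_hilbertBasis ℂ H).choose).symm.injective.countable, b,
    fun T => ?_⟩
  rw [trace, ← Equiv.tsum_eq (equivShrink.{0} (exists_hilbertBasis ℂ H).choose).symm]
  simp only [hb, hc]

/-- Parseval: the squared coordinates in a Hilbert basis sum to the squared norm. -/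
lemma hasSum_norm_inner_sq {α : Type*} (b : HilbertBasis α ℂ H) (x : H) :
    HasSum (fun k => ‖⟪b k, x⟫‖ ^ 2) (‖x‖ ^ 2) := by
  have h := (b.hasSum_inner_mul_inner x x).mapL Complex.reCLM
  simp only [Complex.reCLM_apply] at h
  convert h using 1
  · funext k
    rw [← inner_conj_symm x (b k), ← Complex.normSq_eq_conj_mul_self, Complex.ofReal_re,
      Complex.normSq_eq_norm_sq]
  · rw [inner_self_eq_norm_sq_to_K]
    norm_cast

open scoped lp ENNReal

lemma memlp_two {α : Type*} {f : α → ℂ} (hf : Summable fun a => ‖f a‖ ^ 2) :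
    Memℓp (E := fun _ => ℂ) f 2 := by
  refine memℓp_gen ?_
  simpa using hf

/-! ### The tensor product as a sequence space -/

section Tensor

variable {ι κ : Type*} (b : HilbertBasis κ ℂ H2) (e : HilbertBasis ι ℂ H3)

/-- `x ⊗ y` as the square-summable array of products of coordinates. -/
def tensorVec (x : H2) (y : H3) : ℓ²(ι × κ, ℂ) :=
  ⟨fun p => ⟪e p.1, y⟫ * ⟪b p.2, x⟫, memlp_two (by
    have := (hasSum_norm_inner_sq e y).summable.mul_of_nonneg
      (hasSum_norm_inner_sq b x).summable (fun _ => by positivity) (fun _ => by positivity)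
    simpa [mul_pow] using this)⟩

lemma tensorVec_apply (x : H2) (y : H3) (p : ι × κ) :
    tensorVec b e x y p = ⟪e p.1, y⟫ * ⟪b p.2, x⟫ := rfl

lemma tensorVec_inner (x x' : H2) (y y' : H3) :
    ⟪tensorVec b e x y, tensorVec b e x' y'⟫ = ⟪x, x'⟫ * ⟪y, y'⟫ := by
  have h := tsum_mul_tsum_of_summable_norm (e.summable_inner_mul_inner y y').norm
    (b.summable_inner_mul_inner x x').norm
  rw [e.tsum_inner_mul_inner, b.tsum_inner_mul_inner] at h
  rw [mul_comm, h, lp.inner_eq_tsum]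
  refine tsum_congr fun p => ?_
  rw [tensorVec_apply, tensorVec_apply, RCLike.inner_apply, map_mul, inner_conj_symm,
    inner_conj_symm]
  ring

/-- The standard Hilbert basis of `ℓ²(ι × κ)`. -/
def stdBasis (ι κ : Type*) : HilbertBasis (ι × κ) ℂ ℓ²(ι × κ, ℂ) :=
  HilbertBasis.ofRepr (LinearIsometryEquiv.refl ℂ _)

lemma stdBasis_inner (p : ι × κ) (w : ℓ²(ι × κ, ℂ)) : ⟪stdBasis ι κ p, w⟫ = w p := by
  rw [← HilbertBasis.repr_apply_apply]; rfl

lemma tensorVec_basis (i : ι) (k : κ) :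
    tensorVec b e (b k) (e i) = stdBasis ι κ (i, k) := by
  classical
  ext p
  rw [tensorVec_apply, ← stdBasis_inner p, orthonormal_iff_ite.mp (stdBasis ι κ).orthonormal,
    orthonormal_iff_ite.mp e.orthonormal, orthonormal_iff_ite.mp b.orthonormal]
  rcases p with ⟨i', k'⟩
  by_cases h : i' = i <;> by_cases h' : k' = k <;> simp [h, h']

/-- `ℓ²(ι × κ)` realizes `H2 ⊗ H3`. -/
def tensorL2 : TensorStruct H2 H3 ℓ²(ι × κ, ℂ) where
  t := tensorVec b e
  inner_t := tensorVec_inner b e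
  dense_t := by
    rw [eq_top_iff, ← (stdBasis ι κ).dense_span]
    refine Submodule.topologicalClosure_mono (Submodule.span_mono ?_)
    rintro _ ⟨p, rfl⟩
    exact ⟨b p.2, e p.1, (tensorVec_basis b e p.1 p.2).symm⟩

lemma norm_tensorVec (x : H2) (y : H3) : ‖tensorVec b e x y‖ = ‖x‖ * ‖y‖ := by
  have h := tensorVec_inner b e x x y y
  simp only [inner_self_eq_norm_sq_to_K] at h
  have h' : ‖tensorVec b e x y‖ ^ 2 = (‖x‖ * ‖y‖) ^ 2 := by
    rw [mul_pow]; exact_mod_cast h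
  exact (pow_left_inj₀ (norm_nonneg _) (by positivity) two_ne_zero).mp h'

/-- The operator `y ↦ x ⊗ y`. -/
def tensorWith (x : H2) : H3 →L[ℂ] ℓ²(ι × κ, ℂ) :=
  LinearMap.mkContinuous
    { toFun := tensorVec b e x
      map_add' := fun y y' => by
        ext p
        simp only [lp.coeFn_add, Pi.add_apply, tensorVec_apply, inner_add_right, add_mul]
      map_smul' := fun c y => by
        ext p
        simp only [lp.coeFn_smul, Pi.smul_apply, tensorVec_apply, inner_smul_right,
          RingHom.id_apply, smul_eq_mul, mul_assoc] }
    ‖x‖ (fun y => (norm_tensorVec b e x y).le)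

lemma tensorWith_apply (x : H2) (y : H3) : tensorWith b e x y = tensorVec b e x y := rfl

lemma separable_l2 (ι κ : Type*) [Countable ι] [Countable κ] :
    SeparableSpace ℓ²(ι × κ, ℂ) := by
  have h : IsSeparable (Set.range (stdBasis ι κ)) := (Set.countable_range _).isSeparable
  have h2 := (h.span (R := ℂ)).closure
  rw [← Submodule.topologicalClosure_coe, (stdBasis ι κ).dense_span] at h2
  exact isSeparable_univ_iff.mp (by simpa using h2)

end Tensor

/-! ### The Stinespring operator and the Kraus operators of the complement -/

section Stinespring

variable {ι κ : Type*} (b : HilbertBasis κ ℂ H2)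

/-- The Stinespring operator `x ↦ Σ_i A_i x ⊗ e_i`, in coordinates. It is bounded because
`Σ_i ‖A_i x‖² = ⟪x, S x⟫ ≤ ‖S‖ ‖x‖²`. -/
lemma exists_stinespring (A : ι → H1 →L[ℂ] H2) (S : H1 →L[ℂ] H1)
    (hS : ∀ x, HasSum (fun j => adjoint (A j) (A j x)) (S x)) :
    ∃ V : H1 →L[ℂ] ℓ²(ι × κ, ℂ), ∀ x p, V x p = ⟪b p.2, A p.1 x⟫ := by
  have hA : ∀ x, HasSum (fun i => ‖A i x‖ ^ 2) (⟪x, S x⟫).re := fun x => by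
    have h := ((hS x).mapL (innerSL ℂ x)).mapL Complex.reCLM
    simp only [innerSL_apply_apply, adjoint_inner_right, Complex.reCLM_apply] at h
    convert h using 2 with i
    rw [inner_self_eq_norm_sq_to_K]
    norm_cast
  have hsum : ∀ x, Summable fun p : ι × κ => ‖⟪b p.2, A p.1 x⟫‖ ^ 2 := fun x => by
    refine (summable_prod_of_nonneg fun _ => by positivity).mpr
      ⟨fun i => (hasSum_norm_inner_sq b (A i x)).summable, ?_⟩
    simp only [(hasSum_norm_inner_sq b (A _ x)).tsum_eq]
    exact (hA x).summable
  let V0 : H1 →ₗ[ℂ] ℓ²(ι × κ, ℂ) :=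
    { toFun := fun x => ⟨fun p => ⟪b p.2, A p.1 x⟫, memlp_two (hsum x)⟩
      map_add' := fun x y => by
        ext p
        simp only [map_add, inner_add_right, lp.coeFn_add, Pi.add_apply]
      map_smul' := fun c x => by
        ext p
        simp only [map_smul, inner_smul_right, lp.coeFn_smul, Pi.smul_apply, smul_eq_mul,
          RingHom.id_apply] }
  have hV0 : ∀ x p, V0 x p = ⟪b p.2, A p.1 x⟫ := fun _ _ => rfl
  refine ⟨V0.mkContinuous (√‖S‖) fun x => ?_, hV0⟩
  have h1 : ‖V0 x‖ ^ 2 = (⟪x, S x⟫).re := by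
    have h := hasSum_norm_inner_sq (stdBasis ι κ) (V0 x)
    simp only [stdBasis_inner, hV0] at h
    refine (h.prod_fiberwise fun i => hasSum_norm_inner_sq b (A i x)).unique (hA x)
  have h2 : (⟪x, S x⟫).re ≤ ‖x‖ * (‖S‖ * ‖x‖) :=
    (Complex.re_le_norm _).trans ((norm_inner_le_norm _ _).trans
      (mul_le_mul_of_nonneg_left (S.le_opNorm x) (norm_nonneg _)))
  refine (sq_le_sq₀ (norm_nonneg _) (by positivity)).mp ?_
  rw [h1, mul_pow, Real.sq_sqrt (norm_nonneg _)]
  linarith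

variable (e : HilbertBasis ι ℂ H3) (A : ι → H1 →L[ℂ] H2) (V : H1 →L[ℂ] ℓ²(ι × κ, ℂ))

lemma adjoint_stinespring_tensor (hV : ∀ x p, V x p = ⟪b p.2, A p.1 x⟫) (x : H2) (i : ι) :
    adjoint V (tensorVec b e x (e i)) = adjoint (A i) x := by
  classical
  refine ext_inner_left ℂ fun z => ?_
  rw [adjoint_inner_right, adjoint_inner_right, ← b.tsum_inner_mul_inner, lp.inner_eq_tsum]
  have hinj : Function.Injective (fun k : κ => (i, k)) := fun _ _ h => (Prod.ext_iff.mp h).2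
  rw [← hinj.tsum_eq]
  · refine tsum_congr fun k => ?_
    rw [tensorVec_apply, hV, RCLike.inner_apply, inner_conj_symm,
      orthonormal_iff_ite.mp e.orthonormal, if_pos rfl, one_mul, mul_comm]
  · rintro ⟨j, k⟩ hp
    refine ⟨k, ?_⟩
    by_contra hne
    have hji : j ≠ i := fun h => hne (by rw [h])
    refine hp ?_
    simp only [tensorVec_apply, orthonormal_iff_ite.mp e.orthonormal, if_neg hji, zero_mul,
      inner_zero_right]

/-- The Kraus operators `B_k x = Σ_i ⟪b_k, A_i x⟫ e_i` of the complement, obtained by contracting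
the first leg of the Stinespring operator with `b_k`. -/
def complKraus (k : κ) : H1 →L[ℂ] H3 := adjoint (tensorWith b e (b k)) ∘L V

lemma adjoint_complKraus (k : κ) (y : H3) :
    adjoint (complKraus b e V k) y = adjoint V (tensorVec b e (b k) y) := by
  rw [complKraus, adjoint_comp, adjoint_adjoint]; rfl

lemma inner_complKraus (k : κ) (x : H1) (i : ι) :
    ⟪e i, complKraus b e V k x⟫ = V x (i, k) := by
  rw [complKraus, comp_apply, adjoint_inner_right, tensorWith_apply, tensorVec_basis,
    stdBasis_inner]

/-- `Σ_k B_k* B_k = V* V` strongly: expand `V x` in the standard basis, apply the bounded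
operator `V*`, and group the resulting unconditional sum by `k`. -/
lemma hasSum_complKraus (x : H1) :
    HasSum (fun k => adjoint (complKraus b e V k) (complKraus b e V k x))
      ((adjoint V ∘L V) x) := by
  have h := ((stdBasis ι κ).hasSum_repr (V x)).mapL (adjoint V)
  have h' := (Equiv.prodComm κ ι).hasSum_iff.mpr h
  refine h'.prod_fiberwise fun k => ?_
  have hk := (e.hasSum_repr (complKraus b e V k x)).mapL (adjoint (complKraus b e V k))
  convert hk using 2 with i
  simp only [Function.comp_apply, Equiv.prodComm_apply, Prod.swap_prod_mk,
    HilbertBasis.repr_apply_apply, stdBasis_inner, inner_complKraus, map_smul,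
    adjoint_complKraus, tensorVec_basis]

lemma hasSum_norm_complKraus (x : H1) :
    HasSum (fun k => ‖complKraus b e V k x‖ ^ 2) (‖V x‖ ^ 2) := by
  have h := ((hasSum_complKraus b e V x).mapL (innerSL ℂ x)).mapL Complex.reCLM
  simp only [innerSL_apply_apply, adjoint_inner_right, Complex.reCLM_apply, comp_apply,
    inner_self_eq_norm_sq_to_K] at h
  exact_mod_cast h

end Stinespring

/-! ### Convergence of Kraus sums -/

/-- If `Σ_k ‖B_k x‖² ≤ M² ‖x‖²` then `Σ_k B_k T B_k*` converges absolutely in operator norm for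
trace-class `T`: for `T = Σ_n |x_n⟩⟨y_n|`, Cauchy-Schwarz gives
`Σ_k ‖B_k T B_k*‖ ≤ Σ_n Σ_k ‖B_k x_n‖ ‖B_k y_n‖ ≤ M² Σ_n ‖x_n‖ ‖y_n‖`. -/
lemma summable_kraus {κ : Type*} (B : κ → H1 →L[ℂ] H3) (M : ℝ) (hM : 0 ≤ M)
    (hB : ∀ x (s : Finset κ), ∑ k ∈ s, ‖B k x‖ ^ 2 ≤ (M * ‖x‖) ^ 2)
    (T : H1 →L[ℂ] H1) (hT : IsTraceClass T) :
    Summable fun k => B k ∘L T ∘L adjoint (B k) := by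
  obtain ⟨x, y, hxy, hT⟩ := hT
  have hsq : ∀ x (s : Finset κ), √(∑ k ∈ s, ‖B k x‖ ^ 2) ≤ M * ‖x‖ := fun x s =>
    Real.sqrt_le_iff.mpr ⟨by positivity, hB x s⟩
  have hCS : ∀ n (s : Finset κ),
      ∑ k ∈ s, ‖B k (x n)‖ * ‖B k (y n)‖ ≤ M ^ 2 * (‖x n‖ * ‖y n‖) := fun n s =>
    calc _ ≤ _ := Real.sum_mul_le_sqrt_mul_sqrt s _ _
      _ ≤ (M * ‖x n‖) * (M * ‖y n‖) :=
        mul_le_mul (hsq _ s) (hsq _ s) (Real.sqrt_nonneg _) (by positivity)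
      _ = _ := by ring
  have hinner : ∀ n, Summable fun k => ‖B k (x n)‖ * ‖B k (y n)‖ := fun n =>
    summable_of_sum_le (fun _ => by positivity) (hCS n)
  have hdouble : Summable fun p : ℕ × κ => ‖B p.2 (x p.1)‖ * ‖B p.2 (y p.1)‖ := by
    refine (summable_prod_of_nonneg fun _ => by positivity).mpr ⟨hinner, ?_⟩
    exact Summable.of_nonneg_of_le (fun n => tsum_nonneg fun k => by positivity)
      (fun n => (hinner n).tsum_le_of_sum_le (hCS n)) (hxy.mul_left (M ^ 2))
  have hswap : Summable fun p : κ × ℕ => ‖B p.1 (x p.2)‖ * ‖B p.1 (y p.2)‖ :=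
    (Equiv.prodComm κ ℕ).summable_iff.mpr hdouble
  obtain ⟨hrow, hsum⟩ := (summable_prod_of_nonneg fun _ => by positivity).mp hswap
  refine Summable.of_norm_bounded hsum fun k => ?_
  refine opNorm_le_bound _ (tsum_nonneg fun n => by positivity) fun v => ?_
  have h := (hT (adjoint (B k) v)).mapL (B k)
  rw [← tsum_mul_right]
  refine (h.tsum_eq ▸ tsum_of_norm_bounded ((hrow k).mul_right ‖v‖).hasSum fun n => ?_ :)
  rw [map_smul, norm_smul, adjoint_inner_right, mul_comm, mul_assoc]
  exact mul_le_mul_of_nonneg_left (norm_inner_le_norm _ _) (norm_nonneg _)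

/-- If `Φ : T(H1) → T(H2)` is a quantum operation with Kraus decomposition
`Φ(T) = Σ_{j∈Λ} A_j T A_j*` and `H3` is a separable Hilbert space with orthonormal basis
`{e_j : j ∈ Λ}`, then the map `Ψ(T) = Σ_{i,j∈Λ} tr(A_i T A_j*) |e_i⟩⟨e_j|` is a well-defined
quantum operation complementary to `Φ`. -/
theorem complement_from_kraus
    {H1 H2 H3 : Type*}
    [NormedAddCommGroup H1] [InnerProductSpace ℂ H1] [CompleteSpace H1] [SeparableSpace H1]
    [NormedAddCommGroup H2] [InnerProductSpace ℂ H2] [CompleteSpace H2] [SeparableSpace H2]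
    [NormedAddCommGroup H3] [InnerProductSpace ℂ H3] [CompleteSpace H3] [SeparableSpace H3]
    {ι : Type} [Countable ι]
    (A : ι → H1 →L[ℂ] H2) (S : H1 →L[ℂ] H1)
    (hS : ∀ x, HasSum (fun j => adjoint (A j) (A j x)) (S x))
    (Φ : (H1 →L[ℂ] H1) → (H2 →L[ℂ] H2))
    (hΦ : ∀ T, IsTraceClass T → HasSum (fun j => A j ∘L T ∘L adjoint (A j)) (Φ T))
    (e : HilbertBasis ι ℂ H3) :
    ∃ Ψ : (H1 →L[ℂ] H1) → (H3 →L[ℂ] H3),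
      IsQuantumOperation Ψ ∧
      (∀ T, IsTraceClass T → ∀ i j,
        ⟪e i, Ψ T (e j)⟫ = trace (A i ∘L T ∘L adjoint (A j))) ∧
      IsComplementary Ψ Φ := by
  obtain ⟨κ, hκ, b, htr⟩ := exists_basis_trace H2
  obtain ⟨V, hV⟩ := exists_stinespring b A S hS
  have hΨ : ∀ T, IsTraceClass T → HasSum
      (fun k => complKraus b e V k ∘L T ∘L adjoint (complKraus b e V k))
      (∑' k, complKraus b e V k ∘L T ∘L adjoint (complKraus b e V k)) := fun T hT =>
    (summable_kraus _ ‖V‖ (norm_nonneg _) (fun x s =>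
      (sum_le_hasSum s (fun _ _ => by positivity) (hasSum_norm_complKraus b e V x)).trans
        (pow_le_pow_left₀ (norm_nonneg _) (V.le_opNorm x) 2)) T hT).hasSum
  -- matrix elements of an operator-norm convergent sum
  have hmat : ∀ T, IsTraceClass T → ∀ x y : H3, HasSum
      (fun k => ⟪x, complKraus b e V k (T (adjoint (complKraus b e V k) y))⟫)
      ⟪x, (∑' k, complKraus b e V k ∘L T ∘L adjoint (complKraus b e V k)) y⟫ :=
    fun T hT x y => ((hΨ T hT).mapL (ContinuousLinearMap.apply ℂ H3 y)).mapL (innerSL ℂ x)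
  refine ⟨fun T => ∑' k, complKraus b e V k ∘L T ∘L adjoint (complKraus b e V k),
    ⟨κ, hκ, complKraus b e V, adjoint V ∘L V, hasSum_complKraus b e V, hΨ⟩, ?_, ?_⟩
  · intro T hT i j
    rw [htr, ← (hmat T hT (e i) (e j)).tsum_eq]
    refine tsum_congr fun k => ?_
    rw [inner_complKraus, hV, adjoint_complKraus, adjoint_stinespring_tensor b e A V hV]
    rfl
  · have := separable_l2 ι κ
    refine ⟨⟨ℓ²(ι × κ, ℂ)⟩, tensorL2 b e, V, fun T hT => ⟨⟨ι, inferInstance, e, fun x y => ?_⟩,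
      ⟨κ, hκ, b, fun x y => ?_⟩⟩⟩
    · have h : HasSum (fun i => ⟪x, A i (T (adjoint (A i) y))⟫) ⟪x, Φ T y⟫ :=
        ((hΦ T hT).mapL (ContinuousLinearMap.apply ℂ H2 y)).mapL (innerSL ℂ x)
      convert h using 1
      funext i
      change ⟪tensorVec b e x (e i), V (T (adjoint V (tensorVec b e y (e i))))⟫ =
        ⟪x, A i (T (adjoint (A i) y))⟫
      rw [← adjoint_inner_left, adjoint_stinespring_tensor b e A V hV,
        adjoint_stinespring_tensor b e A V hV, adjoint_inner_left]
    · convert hmat T hT x y using 1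
      funext k
      change ⟪tensorVec b e (b k) x, V (T (adjoint V (tensorVec b e (b k) y)))⟫ = _
      rw [← adjoint_inner_left, ← adjoint_complKraus, ← adjoint_complKraus, adjoint_inner_left]

end PaperInf
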